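/- Let 0 < ε < π/6. If (X,d) is a proper metric space (every bounded closed set is compact) which is locally ATB(ε), then every bounded self-contracted curve in X is rectifiable. -/

import Mathlib

/-- A curve `γ` defined on `I ⊆ ℝ` is self-contracted. -/
def SelfContracted {X : Type*} [MetricSpace X] (γ : ℝ → X) (I : Set ℝ) : Prop :=
  ∀ t₁ ∈ I, ∀ t₂ ∈ I, ∀ t₃ ∈ I, t₁ ≤ t₂ → t₂ ≤ t₃ →
    dist (γ t₂) (γ t₃) ≤ dist (γ t₁) (γ t₃)

/-- A curve is rectifiable if the sums of consecutive distances along increasing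
finite sequences of parameters are uniformly bounded. -/
def Rectifiable {X : Type*} [MetricSpace X] (γ : ℝ → X) (I : Set ℝ) : Prop :=
  ∃ M : ℝ, ∀ (k : ℕ) (t : Fin (k + 1) → ℝ), (∀ i, t i ∈ I) → StrictMono t →
    ∑ i : Fin k, dist (γ (t i.castSucc)) (γ (t i.succ)) ≤ M

/-- The Euclidean comparison angle `∠̃ x p y`. -/
noncomputable def compAngle {X : Type*} [MetricSpace X] (p x y : X) : ℝ :=
  Real.arccos ((dist x p ^ 2 + dist y p ^ 2 - dist x y ^ 2) / (2 * dist x p * dist y p))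

/-- The point `p` satisfies the `ATB(ε)` condition with constants `L` and `R`. -/
def ATBPoint {X : Type*} [MetricSpace X] (ε : ℝ) (p : X) (L : ℕ) (R : ℝ) : Prop :=
  ∀ y : Fin L → X, (∀ i, y i ∈ Metric.ball p R ∧ y i ≠ p) →
    ∃ i j, i ≠ j ∧ compAngle p (y i) (y j) < ε

/-- `X` is locally `ATB(ε)`: for every `x` there are `L ∈ ℕ` and `R > 0` such that
every `p ∈ B_R(x)` satisfies `ATB(ε)` with constants `L` and `R`. -/
def LocalATB (X : Type*) [MetricSpace X] (ε : ℝ) : Prop :=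
  ∀ x : X, ∃ (L : ℕ) (R : ℝ), 0 < R ∧ ∀ p ∈ Metric.ball x R, ATBPoint ε p L R

/-!
Since `cos ε > 1/2`, if `y` and `z` form an angle less than `ε` at `p` and `y` is not much further
from `p` than `z`, then `z` is closer to `y` than to `p` by a definite fraction of the scale. Hence
many indices of a sequence with mutual distances in `[σ, A σ]` would contain a long
chain along which the distance to a later point drops by a fixed multiple of `σ` at every step. So
the number of such indices is bounded.

The length of an arc is bounded by downward induction on its number of anchors: points that look
very distant from the arc, from which it does not recede, and which are seen in directions at
mutual angles at least `π/3`; the `ATB` condition allows fewer than `L` of them. Let `F` be the sum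
of the distances to the anchors. The excess at `p` is the part of the distance still to be travelled
that the drop of `F` does not account for. A piece ending at `p` that is short compared with the
excess at `p` admits the point attaining the excess as a further anchor, so induction bounds its
length by a multiple of the excess. Cutting the arc greedily into such pieces, it remains to sum the
excesses at the cut points. By the packing bound, a combination of `F` and the excess drops by at
least the excess at `p` whenever sufficiently many cut points precede `p`, and the sum telescopes.
-/

section ComparisonGeometry

variable {X : Type*} [MetricSpace X] {p y z : X} {ε : ℝ}

lemma compAngle_comm (p y z : X) : compAngle p y z = compAngle p z y := by
  unfold compAngle
  rw [dist_comm y z]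
  ring_nf

lemma sq_dist_lt_of_compAngle_lt (hε : ε ≤ Real.pi) (hy : 0 < dist p y) (hz : 0 < dist p z)
    (h : compAngle p y z < ε) :
    dist y z ^ 2 < dist p y ^ 2 + dist p z ^ 2 - 2 * dist p y * dist p z * Real.cos ε := by
  rw [compAngle, dist_comm y p, dist_comm z p] at h
  have hcos : Real.cos ε <
      (dist p y ^ 2 + dist p z ^ 2 - dist y z ^ 2) / (2 * dist p y * dist p z) := by
    by_contra! hle
    have hε₀ : 0 ≤ ε := (Real.arccos_nonneg _).trans h.le
    exact h.not_ge (Real.arccos_cos hε₀ hε ▸ Real.arccos_le_arccos hle)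
  rw [lt_div_iff₀ (by positivity)] at hcos
  linarith

lemma dist_le_sub_of_compAngle_lt {η σ : ℝ} (hε : ε ≤ Real.pi) (hη : 0 ≤ η)
    (hcos : 1 / 2 + η ≤ Real.cos ε) (hσ : 0 < σ) (hy : σ ≤ dist p y) (hz : σ ≤ dist p z)
    (hyz : dist p y ≤ dist p z + η * σ) (h : compAngle p y z < ε) :
    dist y z ≤ dist p z - η / 2 * σ := by
  have hy₀ := hσ.trans_le hy
  have hz₀ := hσ.trans_le hz
  have hsq := sq_dist_lt_of_compAngle_lt hε hy₀ hz₀ h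
  have hη' : η ≤ 1 / 2 := by linarith [Real.cos_le_one ε]
  have hgap : η * σ ≤ 2 * dist p z * Real.cos ε - dist p y := by nlinarith
  have hprod : dist p z * (η * σ) ≤ dist p y * (2 * dist p z * Real.cos ε - dist p y) := by
    have hstep : η * dist p z ≤ 2 * dist p z * Real.cos ε - dist p y := by nlinarith
    calc dist p z * (η * σ) = σ * (η * dist p z) := by ring
      _ ≤ dist p y * (2 * dist p z * Real.cos ε - dist p y) := by gcongr
  refine le_of_sq_le_sq ?_ ?_
  · nlinarith [sq_nonneg (η / 2 * σ)]
  · nlinarith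

lemma pi_div_three_le_compAngle (hy : 0 < dist p y) (hyz : dist p y ≤ dist p z / 4)
    (hle : dist y z ≤ dist p z) (hdrop : dist p z - dist y z ≤ dist p y / 4) :
    Real.pi / 3 ≤ compAngle p y z := by
  by_contra! h
  have hz : 0 < dist p z := by linarith
  have hsq := sq_dist_lt_of_compAngle_lt (by linarith [Real.pi_pos]) hy hz h
  rw [Real.cos_pi_div_three] at hsq
  have hdiff : (dist p z - dist y z) * (dist p z + dist y z) ≤
      dist p y / 4 * (2 * dist p z) := by
    gcongr
    linarith
  nlinarith [mul_pos hy hz]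

lemma exists_half_add_le_cos (hε₀ : 0 ≤ ε) (hε : ε < Real.pi / 3) :
    ∃ η > 0, 1 / 2 + η ≤ Real.cos ε := by
  have h := Real.cos_lt_cos_of_nonneg_of_le_pi hε₀ (by linarith [Real.pi_pos]) hε
  rw [Real.cos_pi_div_three] at h
  exact ⟨Real.cos ε - 1 / 2, by linarith, by linarith⟩

end ComparisonGeometry

section ATB

variable {X : Type*} [MetricSpace X] {ε : ℝ} {p : X} {L : ℕ} {R : ℝ}

lemma ATBPoint.mono {ε' R' : ℝ} {L' : ℕ} (h : ATBPoint ε p L R) (hε : ε ≤ ε') (hL : L ≤ L')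
    (hR : R' ≤ R) : ATBPoint ε' p L' R' := by
  intro y hy
  obtain ⟨i, j, hij, hangle⟩ := h (fun i => y (Fin.castLE hL i))
    fun i => ⟨Metric.ball_subset_ball hR (hy _).1, (hy _).2⟩
  exact ⟨_, _, (Fin.castLE_injective hL).ne hij, hangle.trans_le hε⟩

lemma ATBPoint.exists_compAngle_lt {ι : Type*} (h : ATBPoint ε p L R) (x : ι → X)
    {U : Finset ι} (hU : L ≤ U.card) (hx : ∀ i ∈ U, dist p (x i) ∈ Set.Ioo 0 R) :
    ∃ i ∈ U, ∃ j ∈ U, i ≠ j ∧ compAngle p (x i) (x j) < ε := by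
  let e : Fin L ↪ U := (Fin.castLEEmb hU).trans U.equivFin.symm.toEmbedding
  obtain ⟨i, j, hij, hangle⟩ := h (fun i => x (e i)) fun i => by
    obtain ⟨hpos, hlt⟩ := hx _ (e i).2
    exact ⟨by rwa [Metric.mem_ball'], (dist_pos.1 hpos).symm⟩
  exact ⟨e i, (e i).2, e j, (e j).2, Subtype.val_injective.ne (e.injective.ne hij), hangle⟩

lemma LocalATB.exists_uniform (h : LocalATB X ε) {K : Set X} (hK : IsCompact K) :
    ∃ (L : ℕ) (R : ℝ), 0 < R ∧ ∀ p ∈ K, ATBPoint ε p L R := by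
  refine hK.induction_on (p := fun s => ∃ (L : ℕ) (R : ℝ), 0 < R ∧ ∀ p ∈ s, ATBPoint ε p L R)
    ⟨0, 1, one_pos, by simp⟩ ?_ ?_ ?_
  · rintro s t hst ⟨L, R, hR, ht⟩
    exact ⟨L, R, hR, fun p hp => ht p (hst hp)⟩
  · rintro s t ⟨L, R, hR, hs⟩ ⟨L', R', hR', ht⟩
    refine ⟨max L L', min R R', lt_min hR hR', ?_⟩
    rintro p (hp | hp)
    · exact (hs p hp).mono le_rfl (le_max_left _ _) (min_le_left _ _)
    · exact (ht p hp).mono le_rfl (le_max_right _ _) (min_le_right _ _)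
  · intro x _
    obtain ⟨L, R, hR, hball⟩ := h x
    exact ⟨_, mem_nhdsWithin_of_mem_nhds (Metric.ball_mem_nhds x hR), L, R, hR, hball⟩

end ATB

section Packing

lemma exists_star_or_independent {ι : Type*} [LinearOrder ι] (G : ι → ι → Prop) (n l : ℕ) :
    ∀ S : Finset ι, l * (n + 1) ≤ S.card →
      (∃ b ∈ S, ∃ T ⊆ S, n ≤ T.card ∧ ∀ c ∈ T, b < c ∧ G b c) ∨
      ∃ U ⊆ S, U.card = l ∧ ∀ b ∈ U, ∀ c ∈ U, b < c → ¬ G b c := by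
  classical
  induction l with
  | zero => exact fun S _ => .inr ⟨∅, by simp⟩
  | succ l ih =>
    intro S hS
    have hne : S.Nonempty := Finset.card_pos.1 (by grind)
    set b := S.min' hne
    have hb : b ∈ S := S.min'_mem hne
    have hlt : ∀ c ∈ S.erase b, b < c := fun c => Finset.min'_lt_of_mem_erase_min' S hne
    by_cases hT : n ≤ ((S.erase b).filter (G b)).card
    · refine .inl ⟨b, hb, _, (Finset.filter_subset _ _).trans (Finset.erase_subset _ _), hT, ?_⟩
      exact fun c hc => ⟨hlt c (Finset.mem_filter.1 hc).1, (Finset.mem_filter.1 hc).2⟩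
    set S' := (S.erase b).filter (¬ G b ·)
    have hsub : S' ⊆ S := (Finset.filter_subset _ _).trans (Finset.erase_subset _ _)
    have hcard : l * (n + 1) ≤ S'.card := by
      have := Finset.card_filter_add_card_filter_not (s := S.erase b) (G b)
      have := Finset.card_erase_add_one hb
      grind
    obtain ⟨b', hb', T, hTS, hstar⟩ | ⟨U, hU, hUcard, hind⟩ := ih S' hcard
    · exact .inl ⟨b', hsub hb', T, hTS.trans hsub, hstar⟩
    · have hbU : ∀ c ∈ U, b < c ∧ ¬ G b c := fun c hc =>
        ⟨hlt c (Finset.mem_filter.1 (hU hc)).1, (Finset.mem_filter.1 (hU hc)).2⟩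
      refine .inr ⟨insert b U, Finset.insert_subset hb (hU.trans hsub), ?_, ?_⟩
      · rw [Finset.card_insert_of_notMem fun h => (hbU b h).1.false, hUcard]
      · simp only [Finset.forall_mem_insert]
        exact ⟨⟨fun h => (h.false).elim, fun c hc _ => (hbU c hc).2⟩, fun c hc =>
          ⟨fun h => ((hbU c hc).1.asymm h).elim, hind c hc⟩⟩

variable {X : Type*} [MetricSpace X] {ε : ℝ}

lemma lt_add_of_floor_div_eq {s t δ : ℝ} (hδ : 0 < δ) (ht : 0 ≤ t)
    (h : ⌊s / δ⌋₊ = ⌊t / δ⌋₊) : s < t + δ := by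
  have hs' := Nat.lt_floor_add_one (s / δ)
  have ht' := Nat.floor_le (div_nonneg ht hδ.le)
  rw [h] at hs'
  have : s / δ < (t + δ) / δ := by rw [add_div, div_self hδ.ne']; linarith
  exact (div_lt_div_iff_of_pos_right hδ).1 this

lemma ATBPoint.exists_lt_dist_le_sub {ι : Type*} [LinearOrder ι] {η A σ R : ℝ} {L : ℕ} {p : X}
    (h : ATBPoint ε p L R) (hε : ε ≤ Real.pi) (hη : 0 < η) (hcos : 1 / 2 + η ≤ Real.cos ε)
    (hσ : 0 < σ) (hR : A * σ < R) (x : ι → X) {U : Finset ι}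
    (hU : (⌊A / η⌋₊ + 1) * L ≤ U.card) (hx : ∀ i ∈ U, dist p (x i) ∈ Set.Icc σ (A * σ)) :
    ∃ i ∈ U, ∃ j ∈ U, i < j ∧ dist (x i) (x j) ≤ dist p (x j) - η / 2 * σ := by
  have hmaps : ∀ i ∈ U, ⌊dist p (x i) / (η * σ)⌋₊ ∈ Finset.range (⌊A / η⌋₊ + 1) := by
    intro i hi
    rw [Finset.mem_range, Nat.lt_succ_iff]
    apply Nat.floor_mono
    rw [div_le_div_iff₀ (by positivity) hη]
    nlinarith [(hx i hi).2]
  obtain ⟨k, -, hk⟩ := Finset.exists_le_card_fiber_of_mul_le_card_of_maps_to hmaps (by simp)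
    (by simpa using hU)
  obtain ⟨i, hi, j, hj, hij, hangle⟩ := h.exists_compAngle_lt x hk fun i hi => by
    obtain ⟨hlo, hhi⟩ := hx i (Finset.mem_filter.1 hi).1
    exact ⟨hσ.trans_le hlo, hhi.trans_lt hR⟩
  wlog hlt : i < j generalizing i j
  · exact this j hj i hi hij.symm (compAngle_comm p _ _ ▸ hangle)
      (lt_of_le_of_ne (not_lt.1 hlt) hij.symm)
  rw [Finset.mem_filter] at hi hj
  have hclose := lt_add_of_floor_div_eq (mul_pos hη hσ) dist_nonneg (hi.2.trans hj.2.symm)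
  exact ⟨i, hi.1, j, hj.1, hlt, dist_le_sub_of_compAngle_lt hε hη.le hcos hσ (hx i hi.1).1
    (hx j hj.1).1 hclose.le hangle⟩

lemma exists_card_forcing_dist (X : Type*) [MetricSpace X] {η : ℝ} (hε : ε ≤ Real.pi)
    (hη : 0 < η) (hcos : 1 / 2 + η ≤ Real.cos ε) (L : ℕ) (A : ℝ) (k : ℕ) :
    ∃ M : ℕ, ∀ (x : ℕ → X) (R σ : ℝ), 0 < σ → A * σ < R → (∀ i, ATBPoint ε (x i) L R) →
      ∀ (a : ℕ) (T : Finset ℕ), (∀ i ∈ T, a < i) → M ≤ T.card →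
      (∀ i ∈ insert a T, ∀ j ∈ insert a T, i < j → dist (x i) (x j) ∈ Set.Icc σ (A * σ)) →
      ∃ z ∈ T, k * (η / 2 * σ) ≤ dist (x a) (x z) := by
  induction k with
  | zero =>
    refine ⟨1, fun x R σ _ _ _ a T _ hT _ => ?_⟩
    obtain ⟨z, hz⟩ := Finset.card_pos.1 hT
    exact ⟨z, hz, by simp⟩
  | succ k ih =>
    obtain ⟨M, hM⟩ := ih
    refine ⟨((⌊A / η⌋₊ + 1) * L) * (M + 1), fun x R σ hσ hR hATB a T haT hT hd => ?_⟩
    obtain ⟨b, hb, T', hT', hcard, hG⟩ | ⟨U, hU, hcard, hG⟩ := exists_star_or_independent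
      (fun b c => dist (x b) (x c) ≤ dist (x a) (x c) - η / 2 * σ) M _ T hT
    · have hsub : insert b T' ⊆ insert a T := (Finset.insert_subset hb hT').trans
        (Finset.subset_insert _ _)
      obtain ⟨z, hz, hfar⟩ := hM x R σ hσ hR hATB b T' (fun i hi => (hG i hi).1) hcard
        fun i hi j hj => hd i (hsub hi) j (hsub hj)
      refine ⟨z, hT' hz, ?_⟩
      push_cast
      linarith [(hG z hz).2]
    · obtain ⟨b, hb, c, hc, hbc, hle⟩ := (hATB a).exists_lt_dist_le_sub hε hη hcos hσ hR x
        hcard.ge fun i hi => hd a (Finset.mem_insert_self _ _) i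
          (Finset.mem_insert_of_mem (hU hi)) (haT i (hU hi))
      exact absurd hle (hG b hb c hc hbc)

lemma exists_card_le_of_dist_mem_Icc (X : Type*) [MetricSpace X] (hε₀ : 0 ≤ ε)
    (hε : ε < Real.pi / 3) (L : ℕ) (A : ℝ) :
    ∃ M : ℕ, ∀ (x : ℕ → X) (R σ : ℝ), 0 < σ → A * σ < R → (∀ i, ATBPoint ε (x i) L R) →
      ∀ T : Finset ℕ, (∀ i ∈ T, ∀ j ∈ T, i < j → dist (x i) (x j) ∈ Set.Icc σ (A * σ)) →
      T.card ≤ M := by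
  obtain ⟨η, hη, hcos⟩ := exists_half_add_le_cos hε₀ hε
  obtain ⟨k, hk⟩ := exists_nat_gt (A / (η / 2))
  obtain ⟨M, hM⟩ := exists_card_forcing_dist X (by linarith [Real.pi_pos]) hη hcos L A k
  refine ⟨M, fun x R σ hσ hR hATB T hd => ?_⟩
  by_contra! hcard
  have hne : T.Nonempty := Finset.card_pos.1 (by omega)
  set a := T.min' hne
  have ha : a ∈ T := T.min'_mem hne
  have hlt : ∀ i ∈ T.erase a, a < i := fun i => Finset.min'_lt_of_mem_erase_min' T hne
  obtain ⟨z, hz, hfar⟩ := hM x R σ hσ hR hATB a (T.erase a) hlt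
    (by rw [Finset.card_erase_of_mem ha]; omega) (by rwa [Finset.insert_erase ha])
  have hnear := (hd a ha z (Finset.mem_of_mem_erase hz) (hlt z hz)).2
  rw [div_lt_iff₀ (by positivity)] at hk
  nlinarith

end Packing

section Sequences

variable {X : Type*} [MetricSpace X]

/-- Self-contractedness of a sequence, the discrete form of `SelfContracted`. -/
def SelfContractedSeq (x : ℕ → X) : Prop :=
  ∀ ⦃i j k : ℕ⦄, i ≤ j → j ≤ k → dist (x j) (x k) ≤ dist (x i) (x k)

/-- Length of the polygonal path `x a, x (a + 1), …, x b`; it is `0` when `b ≤ a`. -/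
noncomputable def pathLength (x : ℕ → X) (a b : ℕ) : ℝ :=
  ∑ i ∈ Finset.Ico a b, dist (x i) (x (i + 1))

variable {x : ℕ → X}

lemma pathLength_eq_add_add {a i b : ℕ} (hai : a ≤ i) (hib : i < b) :
    pathLength x a b = pathLength x a i + (dist (x i) (x (i + 1)) + pathLength x (i + 1) b) := by
  simp only [pathLength]
  rw [← Finset.sum_Ico_consecutive _ hai hib.le, Finset.sum_eq_sum_Ico_succ_bot hib]

lemma SelfContractedSeq.dist_le_two_mul (hx : SelfContractedSeq x) {a i j b : ℕ} {δ : ℝ}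
    (hδ : dist (x a) (x b) ≤ δ) (hi : i ∈ Set.Icc a b) (hj : j ∈ Set.Icc a b) :
    dist (x i) (x j) ≤ 2 * δ := by
  linarith [dist_triangle_right (x i) (x j) (x b), hx hi.1 hi.2, hx hj.1 hj.2]

lemma SelfContractedSeq.pathLength_eq_zero (hx : SelfContractedSeq x) {a b : ℕ}
    (h : dist (x a) (x b) ≤ 0) : pathLength x a b = 0 := by
  refine Finset.sum_eq_zero fun i hi => ?_
  obtain ⟨hai, hib⟩ := Finset.mem_Ico.1 hi
  have := hx.dist_le_two_mul h ⟨hai, hib.le⟩ ⟨hai.trans i.le_succ, hib⟩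
  exact le_antisymm (by linarith) dist_nonneg

lemma exists_last_lt_dist {a b : ℕ} {c : ℝ} (hab : a ≤ b) (hc : 0 ≤ c)
    (h : c < dist (x a) (x b)) :
    ∃ i ∈ Set.Ico a b, c < dist (x i) (x b) ∧ dist (x (i + 1)) (x b) ≤ c := by
  classical
  have hspec := Nat.findGreatest_spec (P := fun i => c < dist (x i) (x b)) hab h
  have hlt := (Nat.findGreatest_le (P := fun i => c < dist (x i) (x b)) b).lt_of_ne fun heq => by
    rw [heq, dist_self] at hspec
    exact hspec.not_ge hc
  exact ⟨_, ⟨Nat.le_findGreatest hab h, hlt⟩, hspec,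
    not_lt.1 (Nat.findGreatest_is_greatest (Nat.lt_succ_self _) hlt)⟩

-- Greedy choice from the right: after `b`, continue with the last index at distance more than
-- `κ * E b` from `x b`. The step leaving that index is at most `2 * dist (x i) (x b)`.
lemma SelfContractedSeq.exists_separated_finset (hx : SelfContractedSeq x) {E H : ℕ → ℝ}
    {κ B K : ℝ} {a b : ℕ} (hab : a ≤ b) (hκ : 0 ≤ κ)
    (hE : ∀ p ∈ Set.Icc a b, 0 ≤ E p)
    (hshort : ∀ i ≥ a, ∀ p ≥ i, p ≤ b → dist (x i) (x p) ≤ κ * E p → pathLength x i p ≤ B * E p)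
    (hdist : ∀ i ≥ a, ∀ p ≥ i, p ≤ b → dist (x i) (x p) ≤ K * (E p + H i - H p)) :
    ∃ P ⊆ Finset.Icc a b, (∀ i ∈ P, ∀ p ∈ P, i < p → κ * E p < dist (x i) (x p)) ∧
      pathLength x a b ≤ (B + 2 * K) * ∑ p ∈ P, E p + 2 * K * (H a - H b) := by
  classical
  induction b using Nat.strong_induction_on with
  | _ b ih =>
    have hEb := hE b ⟨hab, le_rfl⟩
    by_cases hfar : dist (x a) (x b) ≤ κ * E b
    · refine ⟨{b}, by simpa, by simp, ?_⟩
      have := hshort a le_rfl b hab le_rfl hfar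
      have := dist_nonneg.trans (hdist a le_rfl b hab le_rfl)
      rw [Finset.sum_singleton]
      linarith
    obtain ⟨i, ⟨hai, hib⟩, hi, hnear⟩ :=
      exists_last_lt_dist hab (mul_nonneg hκ hEb) (not_le.1 hfar)
    obtain ⟨P, hP, hsep, hlen⟩ := ih i hib hai (fun p hp => hE p ⟨hp.1, hp.2.trans hib.le⟩)
      (fun j hj p hp hpi => hshort j hj p hp (hpi.trans hib.le))
      (fun j hj p hp hpi => hdist j hj p hp (hpi.trans hib.le))
    have hPi : ∀ p ∈ P, p ≤ i := fun p hp => (Finset.mem_Icc.1 (hP hp)).2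
    refine ⟨insert b P, ?_, ?_, ?_⟩
    · exact Finset.insert_subset (Finset.mem_Icc.2 ⟨hab, le_rfl⟩)
        (hP.trans (Finset.Icc_subset_Icc_right hib.le))
    · simp only [Finset.forall_mem_insert]
      exact ⟨⟨fun h => h.false.elim, fun p hp hbp => absurd (hPi p hp) (by omega)⟩, fun p hp =>
        ⟨fun _ => hi.trans_le (hx (hPi p hp) hib.le), hsep p hp⟩⟩
    · have hstep : dist (x i) (x (i + 1)) ≤ 2 * dist (x i) (x b) :=
        hx.dist_le_two_mul le_rfl ⟨le_rfl, hib.le⟩ ⟨i.le_succ, hib⟩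
      have := hdist i hai b hib.le le_rfl
      have := hshort (i + 1) (hai.trans i.le_succ) b hib le_rfl hnear
      rw [Finset.sum_insert fun h => (hPi b h).not_gt hib, pathLength_eq_add_add hai hib]
      linarith

end Sequences

section Summation

variable {ι : Type*} [LinearOrder ι] {E W : ι → ℝ} {D w₀ w₁ : ℝ}

lemma sum_le_of_le_sub (hD : 0 ≤ D) (hw : w₀ ≤ w₁) (Q : Finset ι) (hED : ∀ p ∈ Q, E p ≤ D)
    (hW : ∀ p ∈ Q, W p ∈ Set.Icc w₀ w₁) (hdrop : ∀ r ∈ Q, ∀ p ∈ Q, r < p → E p ≤ W r - W p) :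
    ∑ p ∈ Q, E p ≤ D + (w₁ - w₀) := by
  induction Q using Finset.induction_on_max generalizing w₀ with
  | empty => simpa using by linarith
  | insert a Q hlt ih =>
    simp only [Finset.forall_mem_insert] at hED hW hdrop
    rw [Finset.sum_insert fun h => (hlt a h).false]
    obtain rfl | ⟨q, hq⟩ := Q.eq_empty_or_nonempty
    · simpa using by linarith
    have hlow : ∀ p ∈ Q, W a + E a ≤ W p := fun p hp => by
      linarith [(hdrop.2 p hp).1 (hlt p hp)]
    have := ih ((hlow q hq).trans (hW.2 q hq).2) hED.2 (fun p hp => ⟨hlow p hp, (hW.2 p hp).2⟩)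
      fun r hr p hp => (hdrop.2 r hr).2 p hp
    linarith [hW.1.1]

lemma dvd_card_filter_mem_Ico (P : Finset ι) {M : ℕ} {r p : ι} (hrp : r ≤ p)
    (hmod : (P.filter (· < r)).card % M = (P.filter (· < p)).card % M) :
    M ∣ (P.filter (· ∈ Set.Ico r p)).card := by
  have hrank : (P.filter (· < p)).card =
      (P.filter (· < r)).card + (P.filter (· ∈ Set.Ico r p)).card := by
    rw [← Finset.card_union_of_disjoint (by
      simp only [Finset.disjoint_filter, Set.mem_Ico]
      exact fun t _ ht h => h.1.not_gt ht), ← Finset.filter_or]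
    congr 1
    ext t
    simp only [Finset.mem_filter, Set.mem_Ico]
    grind
  have hdvd := (Nat.modEq_iff_dvd' (by omega)).1 (show _ ≡ _ [MOD M] from hmod)
  rwa [hrank, Nat.add_sub_cancel_left] at hdvd

-- Elements whose ranks in `P` agree modulo `M` are at least `M` ranks apart, so each of the `M`
-- residue classes telescopes.
lemma sum_le_of_le_sub_of_le_card {M : ℕ} (hM : 0 < M) (hD : 0 ≤ D) (hw : w₀ ≤ w₁)
    (P : Finset ι) (hED : ∀ p ∈ P, E p ≤ D) (hW : ∀ p ∈ P, W p ∈ Set.Icc w₀ w₁)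
    (hdrop : ∀ r ∈ P, ∀ p ∈ P, r < p → M ≤ (P.filter (· ∈ Set.Ico r p)).card →
      E p ≤ W r - W p) :
    ∑ p ∈ P, E p ≤ M * (D + (w₁ - w₀)) := by
  classical
  let rank : ι → ℕ := fun p => (P.filter (· < p)).card
  have hclass : ∀ c ∈ Finset.range M,
      ∑ p ∈ P.filter (rank · % M = c), E p ≤ D + (w₁ - w₀) := by
    intro c _
    refine sum_le_of_le_sub hD hw _ (fun p hp => hED p (Finset.mem_filter.1 hp).1)
      (fun p hp => hW p (Finset.mem_filter.1 hp).1) fun r hr p hp hrp => ?_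
    rw [Finset.mem_filter] at hr hp
    have hpos : 0 < (P.filter (· ∈ Set.Ico r p)).card :=
      Finset.card_pos.2 ⟨r, Finset.mem_filter.2 ⟨hr.1, le_rfl, hrp⟩⟩
    exact hdrop r hr.1 p hp.1 hrp
      (Nat.le_of_dvd hpos (dvd_card_filter_mem_Ico P hrp.le (hr.2.trans hp.2.symm)))
  rw [← Finset.sum_fiberwise_of_maps_to (g := (rank · % M)) (t := Finset.range M)
    fun p _ => Finset.mem_range.2 (Nat.mod_lt _ hM)]
  have := Finset.sum_le_card_nsmul _ _ _ hclass
  rwa [Finset.card_range, nsmul_eq_mul] at this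

end Summation

section Excess

variable {X : Type*} [MetricSpace X] {x : ℕ → X} {F : ℕ → ℝ} {n : ℕ}

/-- The largest amount by which a quarter of the distance from `x i` to a later point `x q`,
`q ≤ n`, exceeds the drop of `F` on the way; the junk value `0` when `n < i`. -/
noncomputable def excess (x : ℕ → X) (F : ℕ → ℝ) (n i : ℕ) : ℝ :=
  ⨆ q : Finset.Icc i n, (dist (x i) (x q) / 4 - (F i - F q))

lemma exists_eq_excess (x : ℕ → X) (F : ℕ → ℝ) {i : ℕ} (hi : i ≤ n) :
    ∃ q ∈ Set.Icc i n, dist (x i) (x q) / 4 - (F i - F q) = excess x F n i := by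
  have : Nonempty (Finset.Icc i n) := ⟨i, Finset.mem_Icc.2 ⟨le_rfl, hi⟩⟩
  obtain ⟨q, hq⟩ := exists_eq_ciSup_of_finite
    (f := fun q : Finset.Icc i n => dist (x i) (x q) / 4 - (F i - F q))
  exact ⟨q, Finset.mem_Icc.1 q.2, hq⟩

lemma dist_le_four_mul_excess {i q : ℕ} (hiq : i ≤ q) (hq : q ≤ n) :
    dist (x i) (x q) ≤ 4 * (excess x F n i + F i - F q) := by
  have : dist (x i) (x q) / 4 - (F i - F q) ≤ excess x F n i :=
    Finite.le_ciSup (fun q : Finset.Icc i n => dist (x i) (x q) / 4 - (F i - F q))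
      ⟨q, Finset.mem_Icc.2 ⟨hiq, hq⟩⟩
  linarith

lemma excess_nonneg {i : ℕ} (hi : i ≤ n) : 0 ≤ excess x F n i := by
  have := dist_le_four_mul_excess (x := x) (F := F) le_rfl hi
  rw [dist_self] at this
  linarith

lemma SelfContractedSeq.excess_add_le (hx : SelfContractedSeq x) {i j : ℕ} (hij : i ≤ j)
    (hj : j ≤ n) : excess x F n j + F j ≤ excess x F n i + F i := by
  obtain ⟨q, ⟨hjq, hqn⟩, hq⟩ := exists_eq_excess x F hj
  linarith [dist_le_four_mul_excess (x := x) (F := F) (hij.trans hjq) hqn, hx hij hjq]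

/-- The quantity whose decrease along a self-contracted sequence pays for the excess. The weights
make a drop smaller than `excess x F n p` force drops of `F` and of `F + excess x F n` smaller than
half of it. -/
noncomputable def potential (x : ℕ → X) (F : ℕ → ℝ) (n i : ℕ) : ℝ :=
  2 * (2 * F i + excess x F n i)

lemma SelfContractedSeq.antitoneOn_potential (hx : SelfContractedSeq x) {lo : ℕ}
    (hF : AntitoneOn F (Set.Icc lo n)) : AntitoneOn (potential x F n) (Set.Icc lo n) := by
  intro i hi j hj hij
  rw [potential, potential]
  linarith [hF hi hj hij, hx.excess_add_le (F := F) hij hj.2]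

lemma SelfContractedSeq.dist_mem_Icc_of_lt_excess (hx : SelfContractedSeq x) {κ : ℝ}
    {lo r i j p : ℕ} (hF : AntitoneOn F (Set.Icc lo n)) (hr : lo ≤ r) (hri : r ≤ i)
    (hij : i ≤ j) (hjp : j ≤ p) (hp : p ≤ n) (hκ : 0 ≤ κ)
    (hsep : κ * excess x F n j < dist (x i) (x j))
    (hlt : potential x F n r - potential x F n p < excess x F n p) :
    dist (x i) (x j) ∈ Set.Icc (κ * (excess x F n p / 2)) (8 * excess x F n p) := by
  have hFrange : ∀ t ∈ Set.Icc r p, F t ∈ Set.Icc (F p) (F r) := fun t ht =>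
    ⟨hF ⟨hr.trans ht.1, ht.2.trans hp⟩ ⟨hr.trans (ht.1.trans ht.2), hp⟩ ht.2,
      hF ⟨hr, ht.1.trans (ht.2.trans hp)⟩ ⟨hr.trans ht.1, ht.2.trans hp⟩ ht.1⟩
  have hi := hFrange i ⟨hri, hij.trans hjp⟩
  have hj := hFrange j ⟨hri.trans hij, hjp⟩
  rw [potential, potential] at hlt
  have hri' := hx.excess_add_le (F := F) hri (hij.trans (hjp.trans hp))
  have hij' := hx.excess_add_le (F := F) hij (hjp.trans hp)
  have hjp' := hx.excess_add_le (F := F) hjp hp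
  refine ⟨(mul_le_mul_of_nonneg_left ?_ hκ).trans hsep.le, ?_⟩
  · linarith [hi.1, hi.2, hj.1, hj.2]
  · have := dist_le_four_mul_excess (x := x) (F := F) hij (hjp.trans hp)
    linarith [hi.1, hi.2, hj.1, hj.2]

end Excess

section Anchors

variable {X : Type*} [MetricSpace X] {ε R : ℝ} {L : ℕ} {x : ℕ → X} {A : Finset X}

/-- The points of `A` are anchors for the portion of `x` indexed by `s`: they look very distant from
it, yet closer than `R`, in directions forming large angles, and `x` does not recede from them. -/
structure Anchored (R : ℝ) (x : ℕ → X) (s : Set ℕ) (A : Finset X) : Prop where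
  antitoneOn : ∀ y ∈ A, AntitoneOn (fun i => dist (x i) y) s
  dist_mem : ∀ y ∈ A, ∀ i ∈ s, dist (x i) y ∈ Set.Ioo 0 R
  dist_le : ∀ y ∈ A, ∀ i ∈ s, ∀ j ∈ s, dist (x i) (x j) ≤ dist (x i) y / 4
  angle : ∀ i ∈ s, (A : Set X).Pairwise fun y z => Real.pi / 3 ≤ compAngle (x i) y z

/-- Total distance from `x i` to the anchors `A`. -/
noncomputable def anchorSum (A : Finset X) (x : ℕ → X) (i : ℕ) : ℝ :=
  ∑ y ∈ A, dist (x i) y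

lemma anchorSum_sub_le (A : Finset X) (x : ℕ → X) (i j : ℕ) :
    anchorSum A x i - anchorSum A x j ≤ A.card * dist (x i) (x j) := by
  rw [anchorSum, anchorSum, ← Finset.sum_sub_distrib, ← nsmul_eq_mul]
  exact Finset.sum_le_card_nsmul _ _ _ fun y _ => by
    linarith [dist_triangle (x i) (x j) y]

namespace Anchored

variable {s t : Set ℕ}

lemma mono (hA : Anchored R x t A) (hst : s ⊆ t) : Anchored R x s A where
  antitoneOn y hy := (hA.antitoneOn y hy).mono hst
  dist_mem y hy i hi := hA.dist_mem y hy i (hst hi)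
  dist_le y hy i hi j hj := hA.dist_le y hy i (hst hi) j (hst hj)
  angle i hi := hA.angle i (hst hi)

lemma card_lt (hA : Anchored R x s A) (hε : ε ≤ Real.pi / 3) {i : ℕ} (hi : i ∈ s)
    (hATB : ATBPoint ε (x i) L R) : A.card < L := by
  by_contra! hL
  obtain ⟨y, hy, z, hz, hyz, hlt⟩ :=
    hATB.exists_compAngle_lt id hL fun y hy => hA.dist_mem y hy i hi
  exact hlt.not_ge (hε.trans (hA.angle i hi hy hz hyz))

lemma notMem (hA : Anchored R x s A) {i : ℕ} (hi : i ∈ s) : x i ∉ A := fun h => by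
  simpa using (hA.dist_mem _ h i hi).1

lemma antitoneOn_anchorSum (hA : Anchored R x s A) : AntitoneOn (anchorSum A x) s :=
  fun _ hi _ hj hij => Finset.sum_le_sum fun y hy => hA.antitoneOn y hy hi hj hij

lemma dist_sub_le_anchorSum_sub (hA : Anchored R x s A) {y : X} (hy : y ∈ A) {i j : ℕ}
    (hi : i ∈ s) (hj : j ∈ s) (hij : i ≤ j) :
    dist (x i) y - dist (x j) y ≤ anchorSum A x i - anchorSum A x j := by
  rw [anchorSum, anchorSum, ← Finset.sum_sub_distrib]
  exact Finset.single_le_sum (f := fun y => dist (x i) y - dist (x j) y)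
    (fun y hy => sub_nonneg.2 (hA.antitoneOn y hy hi hj hij)) hy

lemma insert_of_forall [DecidableEq X] {y : X} (hA : Anchored R x s A)
    (hanti : AntitoneOn (fun i => dist (x i) y) s)
    (hmem : ∀ i ∈ s, dist (x i) y ∈ Set.Ioo 0 R)
    (hle : ∀ i ∈ s, ∀ j ∈ s, dist (x i) (x j) ≤ dist (x i) y / 4)
    (hangle : ∀ i ∈ s, ∀ z ∈ A, Real.pi / 3 ≤ compAngle (x i) y z) :
    Anchored R x s (insert y A) where
  antitoneOn := (Finset.forall_mem_insert ..).2 ⟨hanti, hA.antitoneOn⟩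
  dist_mem := (Finset.forall_mem_insert ..).2 ⟨hmem, hA.dist_mem⟩
  dist_le := (Finset.forall_mem_insert ..).2 ⟨hle, hA.dist_le⟩
  angle i hi := by
    rw [Finset.coe_insert]
    refine (hA.angle i hi).insert fun z hz _ => ⟨hangle i hi z hz, ?_⟩
    rw [compAngle_comm]
    exact hangle i hi z hz

variable {lo hi a p q : ℕ}

lemma four_mul_excess_le_dist (hA : Anchored R x (Set.Icc lo hi) A) (hp : lo ≤ p)
    (hq : q ∈ Set.Icc p hi)
    (hE : dist (x p) (x q) / 4 - (anchorSum A x p - anchorSum A x q) =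
      excess x (anchorSum A x) hi p) :
    4 * excess x (anchorSum A x) hi p ≤ dist (x p) (x q) := by
  linarith [hA.antitoneOn_anchorSum ⟨hp, hq.1.trans hq.2⟩ ⟨hp.trans hq.1, hq.2⟩ hq.1]

-- The point attaining the excess at `p` is the new anchor: on the way to it the distances to the
-- old anchors drop by at most a quarter of its own distance, which forces large angles.
lemma insert_of_excess [DecidableEq X] (hx : SelfContractedSeq x)
    (hA : Anchored R x (Set.Icc lo hi) A)
    (hR : ∀ i ∈ Set.Icc lo hi, ∀ j ∈ Set.Icc lo hi, dist (x i) (x j) < R)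
    (ha : lo ≤ a) (hap : a ≤ p) (hq : q ∈ Set.Icc p hi)
    (hE : dist (x p) (x q) / 4 - (anchorSum A x p - anchorSum A x q) =
      excess x (anchorSum A x) hi p)
    (hpos : 0 < excess x (anchorSum A x) hi p)
    (hnear : (A.card + 2) * dist (x a) (x p) ≤ excess x (anchorSum A x) hi p) :
    Anchored R x (Set.Icc a p) (insert (x q) A) := by
  have hsub : Set.Icc a p ⊆ Set.Icc lo hi := Set.Icc_subset_Icc ha (hq.1.trans hq.2)
  have hqs : q ∈ Set.Icc lo hi := ⟨ha.trans (hap.trans hq.1), hq.2⟩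
  have hfar : ∀ i ∈ Set.Icc a p, dist (x p) (x q) ≤ dist (x i) (x q) := fun i hi => hx hi.2 hq.1
  have h4 := hA.four_mul_excess_le_dist (ha.trans hap) hq hE
  have hcard := mul_nonneg A.card.cast_nonneg' (dist_nonneg (x := x a) (y := x p))
  refine (hA.mono hsub).insert_of_forall (fun i _ j hj hij => hx hij (hj.2.trans hq.1))
    (fun i hi => ⟨by linarith [hfar i hi], hR i (hsub hi) q hqs⟩) (fun i hi j hj => ?_)
    fun i hi y hy => ?_
  · linarith [hx.dist_le_two_mul le_rfl hi hj, hfar i hi]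
  · have hiq : i ≤ q := hi.2.trans hq.1
    refine pi_div_three_le_compAngle (by linarith [hfar i hi]) (hA.dist_le y hy i (hsub hi) q hqs)
      (hA.antitoneOn y hy (hsub hi) hqs hiq) ?_
    have hdrop : anchorSum A x i - anchorSum A x p ≤ A.card * dist (x a) (x p) :=
      (anchorSum_sub_le A x i p).trans (by gcongr; exact hx hi.1 hi.2)
    linarith [hA.dist_sub_le_anchorSum_sub hy (hsub hi) hqs hiq, hfar i hi,
      dist_nonneg (x := x a) (y := x p)]

end Anchored

end Anchors

section Induction

variable {X : Type*} [MetricSpace X] {ε R D C : ℝ} {L m : ℕ} {x : ℕ → X} {lo hi : ℕ}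
  {A : Finset X}

/-- The arc `x lo, …, x hi` has diameter at most `D`, which is small for the `ATB` radius `R`, and
`A` is a set of anchors for it. -/
structure AnchoredArc (ε : ℝ) (L : ℕ) (R D : ℝ) (x : ℕ → X) (lo hi : ℕ) (A : Finset X) :
    Prop where
  selfContracted : SelfContractedSeq x
  atbPoint : ∀ i, ATBPoint ε (x i) L R
  le : lo ≤ hi
  anchored : Anchored R x (Set.Icc lo hi) A
  two_mul_lt : 2 * D < R
  dist_le : ∀ i ∈ Set.Icc lo hi, ∀ j ∈ Set.Icc lo hi, dist (x i) (x j) ≤ D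

/-- Arcs with `m` anchors have length at most `C` times their diameter. -/
def AnchoredLengthBound (X : Type*) [MetricSpace X] (ε : ℝ) (L m : ℕ) (C : ℝ) : Prop :=
  ∀ ⦃R D : ℝ⦄ ⦃x : ℕ → X⦄ ⦃lo hi : ℕ⦄ ⦃A : Finset X⦄, A.card = m →
    AnchoredArc ε L R D x lo hi A → pathLength x lo hi ≤ C * D

lemma anchoredLengthBound_self (X : Type*) [MetricSpace X] (hε : ε ≤ Real.pi / 3) (L : ℕ) :
    AnchoredLengthBound X ε L L 0 := fun _ _ _ _ _ _ hcard h =>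
  absurd hcard (h.anchored.card_lt hε ⟨le_rfl, h.le⟩ (h.atbPoint _)).ne

namespace AnchoredArc

lemma diam_nonneg (h : AnchoredArc ε L R D x lo hi A) : 0 ≤ D :=
  dist_nonneg.trans (h.dist_le lo ⟨le_rfl, h.le⟩ lo ⟨le_rfl, h.le⟩)

lemma four_mul_excess_le (h : AnchoredArc ε L R D x lo hi A) {p : ℕ} (hp : p ∈ Set.Icc lo hi) :
    4 * excess x (anchorSum A x) hi p ≤ D := by
  obtain ⟨q, hq, hE⟩ := exists_eq_excess x (anchorSum A x) hp.2
  exact (h.anchored.four_mul_excess_le_dist hp.1 hq hE).trans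
    (h.dist_le p hp q ⟨hp.1.trans hq.1, hq.2⟩)

lemma pathLength_le_mul_excess (h : AnchoredArc ε L R D x lo hi A)
    (hC : AnchoredLengthBound X ε L (A.card + 1) C) {a p : ℕ} (ha : lo ≤ a) (hap : a ≤ p)
    (hp : p ≤ hi)
    (hnear : dist (x a) (x p) ≤ 1 / (A.card + 2) * excess x (anchorSum A x) hi p) :
    pathLength x a p ≤ C * excess x (anchorSum A x) hi p := by
  classical
  obtain hE₀ | hpos := (excess_nonneg (x := x) (F := anchorSum A x) hp).eq_or_lt
  · rw [← hE₀, mul_zero] at hnear ⊢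
    exact (h.selfContracted.pathLength_eq_zero hnear).le
  obtain ⟨q, hq, hE⟩ := exists_eq_excess x (anchorSum A x) hp
  have hqs : q ∈ Set.Icc lo hi := ⟨ha.trans (hap.trans hq.1), hq.2⟩
  have hED := h.four_mul_excess_le ⟨ha.trans hap, hp⟩
  have hDR := h.two_mul_lt
  rw [one_div_mul_eq_div, le_div_iff₀' (by positivity)] at hnear
  refine hC (Finset.card_insert_of_notMem (h.anchored.notMem hqs))
    ⟨h.selfContracted, h.atbPoint, hap, h.anchored.insert_of_excess h.selfContracted
      (fun i hi j hj => ?_) ha hap hq hE hpos hnear, by linarith, fun i hi j hj => ?_⟩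
  · linarith [h.dist_le i hi j hj, h.diam_nonneg]
  · have := mul_nonneg A.card.cast_nonneg' (dist_nonneg (x := x a) (y := x p))
    linarith [h.selfContracted.dist_le_two_mul le_rfl hi hj]

lemma anchorSum_drop_le (h : AnchoredArc ε L R D x lo hi A) :
    anchorSum A x lo - anchorSum A x hi ≤ A.card * D :=
  (anchorSum_sub_le A x lo hi).trans
    (by gcongr; exact h.dist_le lo ⟨le_rfl, h.le⟩ hi ⟨h.le, le_rfl⟩)

end AnchoredArc

-- If the potential drops by less than the excess at `p`, then the selected points between `r` and
-- `p` have mutual distances comparable to that excess, so packing bounds their number.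
lemma exists_card_forcing_excess_le_sub (X : Type*) [MetricSpace X] (hε₀ : 0 ≤ ε)
    (hε : ε < Real.pi / 3) (L m : ℕ) :
    ∃ M : ℕ, ∀ ⦃R D : ℝ⦄ ⦃x : ℕ → X⦄ ⦃lo hi : ℕ⦄ ⦃A : Finset X⦄, A.card = m →
      AnchoredArc ε L R D x lo hi A → ∀ P ⊆ Finset.Icc lo hi,
      (∀ i ∈ P, ∀ p ∈ P, i < p →
        1 / (m + 2) * excess x (anchorSum A x) hi p < dist (x i) (x p)) →
      ∀ r ∈ P, ∀ p ∈ P, M < (P.filter (· ∈ Set.Ico r p)).card →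
        excess x (anchorSum A x) hi p ≤
          potential x (anchorSum A x) hi r - potential x (anchorSum A x) hi p := by
  obtain ⟨M, hM⟩ := exists_card_le_of_dist_mem_Icc X hε₀ hε L (16 * (m + 2))
  refine ⟨M, ?_⟩
  rintro R D x lo hi A rfl h P hP hsep r hr p hp hcard
  by_contra! hlt
  have hps := Finset.mem_Icc.1 (hP hp)
  have hpos : 0 < excess x (anchorSum A x) hi p := by
    obtain ⟨t, ht⟩ := Finset.card_pos.1 (M.zero_le.trans_lt hcard)
    have hrp := (Finset.mem_filter.1 ht).2.1.trans (Finset.mem_filter.1 ht).2.2.le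
    linarith [h.selfContracted.antitoneOn_potential h.anchored.antitoneOn_anchorSum
      (Finset.mem_Icc.1 (hP hr)) hps hrp]
  have hσ : 16 * (A.card + 2) * (1 / (A.card + 2) * (excess x (anchorSum A x) hi p / 2)) =
      8 * excess x (anchorSum A x) hi p := by
    field_simp
    norm_num
  refine hcard.not_ge (hM x R (1 / (A.card + 2) * (excess x (anchorSum A x) hi p / 2))
    (by positivity) (by linarith [h.four_mul_excess_le hps, h.two_mul_lt]) h.atbPoint _
    fun i hi j hj hij => ?_)
  rw [Finset.mem_filter] at hi hj
  rw [hσ]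
  exact h.selfContracted.dist_mem_Icc_of_lt_excess h.anchored.antitoneOn_anchorSum
    (Finset.mem_Icc.1 (hP hr)).1 hi.2.1 hij.le hj.2.2.le hps.2 (by positivity)
    (hsep i hi.1 j hj.1 hij) hlt

lemma exists_sum_excess_le (X : Type*) [MetricSpace X] (hε₀ : 0 ≤ ε) (hε : ε < Real.pi / 3)
    (L m : ℕ) :
    ∃ C : ℝ, 0 ≤ C ∧ ∀ ⦃R D : ℝ⦄ ⦃x : ℕ → X⦄ ⦃lo hi : ℕ⦄ ⦃A : Finset X⦄, A.card = m →
      AnchoredArc ε L R D x lo hi A → ∀ P ⊆ Finset.Icc lo hi,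
      (∀ i ∈ P, ∀ p ∈ P, i < p →
        1 / (m + 2) * excess x (anchorSum A x) hi p < dist (x i) (x p)) →
      ∑ p ∈ P, excess x (anchorSum A x) hi p ≤ C * D := by
  obtain ⟨M, hM⟩ := exists_card_forcing_excess_le_sub X hε₀ hε L m
  refine ⟨(M + 1) * (4 * m + 2), by positivity, ?_⟩
  intro R D x lo hi A hcard h P hP hsep
  have hlo : lo ∈ Set.Icc lo hi := ⟨le_rfl, h.le⟩
  have hhi : hi ∈ Set.Icc lo hi := ⟨h.le, le_rfl⟩
  have hPs : ∀ p ∈ P, p ∈ Set.Icc lo hi := fun p hp => Finset.mem_Icc.1 (hP hp)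
  have hED : ∀ p ∈ Set.Icc lo hi, excess x (anchorSum A x) hi p ∈ Set.Icc 0 (D / 4) :=
    fun p hp => ⟨excess_nonneg hp.2, by linarith [h.four_mul_excess_le hp]⟩
  have hW := h.selfContracted.antitoneOn_potential h.anchored.antitoneOn_anchorSum
  have hsum := sum_le_of_le_sub_of_le_card M.succ_pos h.diam_nonneg (hW hlo hhi h.le) P
    (fun p hp => by linarith [(hED p (hPs p hp)).1, (hED p (hPs p hp)).2])
    (fun p hp => ⟨hW (hPs p hp) hhi (hPs p hp).2, hW hlo (hPs p hp) (hPs p hp).1⟩)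
    fun r hr p hp _ => hM hcard h P hP hsep r hr p hp
  rw [potential, potential, Nat.cast_succ] at hsum
  have hF := h.anchorSum_drop_le
  rw [hcard] at hF
  refine hsum.trans ?_
  rw [mul_assoc]
  gcongr
  linarith [(hED lo hlo).2, (hED hi hhi).1, h.diam_nonneg]

lemma AnchoredLengthBound.exists_of_succ (hε₀ : 0 ≤ ε) (hε : ε < Real.pi / 3) (hC₀ : 0 ≤ C)
    (hC : AnchoredLengthBound X ε L (m + 1) C) : ∃ C' : ℝ, 0 ≤ C' ∧
      AnchoredLengthBound X ε L m C' := by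
  obtain ⟨K, hK₀, hK⟩ := exists_sum_excess_le X hε₀ hε L m
  refine ⟨(C + 8) * K + 8 * (m + 1), by positivity, ?_⟩
  rintro R D x lo hi A rfl h
  obtain ⟨P, hP, hsep, hlen⟩ := h.selfContracted.exists_separated_finset
    (E := excess x (anchorSum A x) hi) (H := fun i => excess x (anchorSum A x) hi i +
      anchorSum A x i) (K := 4) h.le (by positivity) (fun p hp => excess_nonneg hp.2)
    (fun a ha p hap hp => h.pathLength_le_mul_excess hC ha hap hp)
    fun a _ p hap hp => by
      linarith [dist_le_four_mul_excess (x := x) (F := anchorSum A x) hap hp]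
  have hsum := mul_le_mul_of_nonneg_left (hK rfl h P hP hsep) (by positivity : 0 ≤ C + 8)
  linarith [h.anchorSum_drop_le, h.four_mul_excess_le ⟨le_rfl, h.le⟩, h.diam_nonneg,
    excess_nonneg (x := x) (F := anchorSum A x) h.le,
    excess_nonneg (x := x) (F := anchorSum A x) (le_refl hi)]

lemma exists_anchoredLengthBound_zero (X : Type*) [MetricSpace X] (hε₀ : 0 ≤ ε)
    (hε : ε < Real.pi / 3) (L : ℕ) : ∃ C : ℝ, 0 ≤ C ∧ AnchoredLengthBound X ε L 0 C :=
  Nat.decreasingInduction (motive := fun m _ => ∃ C : ℝ, 0 ≤ C ∧ AnchoredLengthBound X ε L m C)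
    (fun _ _ ⟨_, hC₀, hC⟩ => hC.exists_of_succ hε₀ hε hC₀)
    ⟨0, le_rfl, anchoredLengthBound_self X hε.le L⟩ L.zero_le

end Induction

section Rectifiability

variable {X : Type*} [MetricSpace X] {ε : ℝ}

lemma exists_card_le_of_lt_dist {s : Set X} (hs : TotallyBounded s) {r : ℝ}
    (hr : 0 < r) : ∃ N : ℕ, ∀ (x : ℕ → X) (P : Finset ℕ), (∀ i ∈ P, x i ∈ s) →
      (∀ i ∈ P, ∀ j ∈ P, i < j → r < dist (x i) (x j)) → P.card ≤ N := by
  obtain ⟨t, ht, hst⟩ := Metric.totallyBounded_iff.1 hs (r / 2) (half_pos hr)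
  refine ⟨ht.toFinset.card, fun x P hP hsep => ?_⟩
  have hcover : ∀ i ∈ P, ∃ y ∈ t, dist (x i) y < r / 2 := fun i hi => by
    simpa using hst (hP i hi)
  have : Nonempty X := ⟨x 0⟩
  choose! c hct hc using hcover
  refine Finset.card_le_card_of_injOn c (fun i hi => by simpa using hct i hi) ?_
  intro i hi j hj hij
  by_contra hne
  wlog hlt : i < j generalizing i j
  · exact this hj hi hij.symm (Ne.symm hne) (lt_of_le_of_ne (not_lt.1 hlt) (Ne.symm hne))
  have hi' := hc i hi
  rw [hij] at hi'
  linarith [hsep i hi j hj hlt, hc j hj, dist_triangle_right (x i) (x j) (c j)]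

lemma exists_pathLength_le (hε₀ : 0 ≤ ε) (hε : ε < Real.pi / 3) {s : Set X}
    (hs : TotallyBounded s) {L : ℕ} {R : ℝ} (hR : 0 < R) (hATB : ∀ p ∈ s, ATBPoint ε p L R) :
    ∃ M : ℝ, ∀ x : ℕ → X, SelfContractedSeq x → (∀ i, x i ∈ s) → ∀ n, pathLength x 0 n ≤ M := by
  obtain ⟨C, hC₀, hC⟩ := exists_anchoredLengthBound_zero X hε₀ hε L
  obtain ⟨Δ, hΔ⟩ := Metric.isBounded_iff.1 hs.isBounded
  obtain ⟨N, hN⟩ := exists_card_le_of_lt_dist hs (r := R / 5) (by positivity)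
  refine ⟨(2 * C + 2 * (|Δ| / (R / 5))) * (N * (R / 5)), fun x hx hxs n => ?_⟩
  have hshort : ∀ a ≥ 0, ∀ p ≥ a, p ≤ n → dist (x a) (x p) ≤ 1 * (R / 5) →
      pathLength x a p ≤ 2 * C * (R / 5) := by
    intro a _ p hap _ hnear
    have hanchored : Anchored R x (Set.Icc a p) ∅ := by constructor <;> simp
    linarith [hC rfl ⟨hx, fun i => hATB _ (hxs i), hap, hanchored, by linarith,
      fun i hi j hj => hx.dist_le_two_mul hnear hi hj⟩]
  obtain ⟨P, -, hsep, hlen⟩ := hx.exists_separated_finset (E := fun _ => R / 5) (H := fun _ => 0)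
    (K := |Δ| / (R / 5)) n.zero_le zero_le_one (fun _ _ => by positivity) hshort
    fun i _ p _ _ => by
      rw [add_zero, sub_zero, div_mul_cancel₀ _ (by positivity)]
      exact (hΔ (hxs i) (hxs p)).trans (le_abs_self Δ)
  simp only [one_mul] at hsep
  calc pathLength x 0 n ≤ (2 * C + 2 * (|Δ| / (R / 5))) * (P.card * (R / 5)) := by
        simpa using hlen
    _ ≤ _ := by
        gcongr
        exact hN x P (fun i _ => hxs i) hsep

lemma rectifiable_of_pathLength_le {γ : ℝ → X} {I : Set ℝ} {M : ℝ}
    (h : ∀ s : ℕ → ℝ, Monotone s → (∀ i, s i ∈ I) → ∀ n, pathLength (γ ∘ s) 0 n ≤ M) :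
    Rectifiable γ I := by
  refine ⟨M, fun k t ht hmono => ?_⟩
  have hlen := h (fun i => t (Fin.clamp i k)) (hmono.monotone.comp Fin.clamp_monotone)
    (fun i => ht _) k
  rw [pathLength, Nat.Ico_zero_eq_range, Finset.sum_range] at hlen
  refine le_of_eq_of_le (Finset.sum_congr rfl fun i _ => ?_) hlen
  have hcast : Fin.clamp i k = i.castSucc := by ext; simp [i.is_lt.le]
  have hsucc : Fin.clamp (i + 1) k = i.succ := by ext; simp [Nat.succ_le_of_lt i.is_lt]
  simp only [Function.comp_apply, hcast, hsucc]

theorem SelfContracted.rectifiable_of_totallyBounded {γ : ℝ → X} {I : Set ℝ}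
    (hsc : SelfContracted γ I) (hε : ε < Real.pi / 3) (hs : TotallyBounded (γ '' I)) {L : ℕ}
    {R : ℝ} (hR : 0 < R) (hATB : ∀ p ∈ γ '' I, ATBPoint ε p L R) : Rectifiable γ I := by
  obtain ⟨M, hM⟩ := exists_pathLength_le (le_max_right ε 0) (max_lt hε (by positivity)) hs hR
    fun p hp => (hATB p hp).mono (le_max_left ε 0) le_rfl le_rfl
  exact rectifiable_of_pathLength_le fun s hs hsI => hM _
    (fun i j k hij hjk => hsc _ (hsI i) _ (hsI j) _ (hsI k) (hs hij) (hs hjk))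
    fun i => Set.mem_image_of_mem γ (hsI i)

theorem rectifiable_of_properLocalATB_general (hε : ε < Real.pi / 3) (hATB : LocalATB X ε)
    {γ : ℝ → X} {I : Set ℝ} (hcomp : IsCompact (closure (γ '' I))) (hsc : SelfContracted γ I) :
    Rectifiable γ I := by
  obtain ⟨L, R, hR, h⟩ := hATB.exists_uniform hcomp
  exact hsc.rectifiable_of_totallyBounded hε (hcomp.totallyBounded.subset subset_closure) hR
    fun p hp => h p (subset_closure hp)

end Rectifiability

/-- In a proper, locally `ATB(ε)` metric space with `0 < ε < π/6`, every bounded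
self-contracted curve is rectifiable. -/
theorem rectifiable_of_properLocalATB
    {X : Type*} [MetricSpace X] [ProperSpace X]
    (ε : ℝ) (hε0 : 0 < ε) (hε : ε < Real.pi / 6)
    (hATB : LocalATB X ε)
    (γ : ℝ → X) (I : Set ℝ) (hI : I.OrdConnected)
    (hbdd : Bornology.IsBounded (γ '' I))
    (hsc : SelfContracted γ I) :
    Rectifiable γ I :=
  rectifiable_of_properLocalATB_general (by linarith) hATB hbdd.isCompact_closure hsc
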